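/- Let F be a field with |F| > n, and let A = (A_0,…,A_{r−1}) and B = (B_0,…,B_{r−1}) be tuples of r matrices of size n×n over F. Let V := { P ∈ F^{n×n} : B_i P = P A_i for all i ∈ {0,…,r−1} }, an F-linear subspace of the n×n matrices, and let P_1,…,P_ℓ be a basis of V. Then there exists an invertible n×n matrix P over F with B_i = P A_i P^{-1} for all i if and only if the polynomial det(Σ_{j=1}^{ℓ} x_j P_j) ∈ F[x_1,…,x_ℓ] is not the zero polynomial. -/

import Mathlib

/-- Let `|F| > n` and let `A`, `B` be tuples of `r` matrices of size
`n×n` over `F`.  Let `P_1,…,P_ℓ` be a basis of the solution space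
`V = { P : B_i P = P A_i for all i }`.  Then `A` and `B` are simultaneously conjugate
(`B_i = P A_i P⁻¹` for some invertible `P`) iff `det(Σ_j x_j P_j)` is not the zero
polynomial in `F[x_1,…,x_ℓ]`. -/
theorem orbit_membership_iff_det_ne_zero {F : Type*} [Field F]
    (n r ℓ : ℕ) (hF : (n : Cardinal) < Cardinal.mk F)
    (A B : Fin r → Matrix (Fin n) (Fin n) F)
    (Pb : Fin ℓ → Matrix (Fin n) (Fin n) F)
    (hli : LinearIndependent F Pb)
    (hspan : ∀ P : Matrix (Fin n) (Fin n) F,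
      (∀ i, B i * P = P * A i) ↔ P ∈ Submodule.span F (Set.range Pb)) :
    (∃ P : GL (Fin n) F, ∀ i,
        B i = (P : Matrix (Fin n) (Fin n) F) * A i *
          ((P⁻¹ : GL (Fin n) F) : Matrix (Fin n) (Fin n) F)) ↔
      Matrix.det
          (∑ j : Fin ℓ, (MvPolynomial.X j : MvPolynomial (Fin ℓ) F) • (Pb j).map (MvPolynomial.C : F → MvPolynomial (Fin ℓ) F) :
            Matrix (Fin n) (Fin n) (MvPolynomial (Fin ℓ) F)) ≠ 0 := by
  have hev : ∀ x : Fin ℓ → F, MvPolynomial.eval x (Matrix.det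
      (∑ j : Fin ℓ, (MvPolynomial.X j : MvPolynomial (Fin ℓ) F) •
        (Pb j).map (MvPolynomial.C : F → MvPolynomial (Fin ℓ) F) :
            Matrix (Fin n) (Fin n) (MvPolynomial (Fin ℓ) F))) =
      Matrix.det (∑ j, x j • Pb j) := by
    intro x
    rw [RingHom.map_det]
    congr 1
    ext a b
    simp [Matrix.sum_apply]
  constructor
  · rintro ⟨P, hP⟩ h0
    have hmem : (P : Matrix (Fin n) (Fin n) F) ∈ Submodule.span F (Set.range Pb) := by
      rw [← hspan]
      intro i
      rw [hP i, Matrix.mul_assoc, ← Units.val_mul]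
      simp
    obtain ⟨c, hc⟩ := (Submodule.mem_span_range_iff_exists_fun F).1 hmem
    have h := hev c
    rw [h0, hc, map_zero] at h
    have hu : IsUnit (P : Matrix (Fin n) (Fin n) F).det :=
      (Matrix.isUnit_iff_isUnit_det _).1 P.isUnit
    exact hu.ne_zero h.symm
  · intro h0
    have hhom : (Matrix.det
      (∑ j : Fin ℓ, (MvPolynomial.X j : MvPolynomial (Fin ℓ) F) •
        (Pb j).map (MvPolynomial.C : F → MvPolynomial (Fin ℓ) F) :
            Matrix (Fin n) (Fin n) (MvPolynomial (Fin ℓ) F))).IsHomogeneous n := by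
      rw [Matrix.det_apply']
      refine MvPolynomial.IsHomogeneous.sum _ _ _ fun σ _ => ?_
      have hp : (∏ i : Fin n, (∑ j : Fin ℓ, (MvPolynomial.X j : MvPolynomial (Fin ℓ) F) •
        (Pb j).map (MvPolynomial.C : F → MvPolynomial (Fin ℓ) F) :
            Matrix (Fin n) (Fin n) (MvPolynomial (Fin ℓ) F)) (σ i) i).IsHomogeneous
            (∑ i : Fin n, 1) := by
        refine MvPolynomial.IsHomogeneous.prod _ _ _ fun i _ => ?_
        rw [Matrix.sum_apply]
        refine MvPolynomial.IsHomogeneous.sum _ _ _ fun j _ => ?_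
        exact (MvPolynomial.isHomogeneous_X F j).mul (MvPolynomial.isHomogeneous_C _ _)
      have hs := (MvPolynomial.isHomogeneous_C (Fin ℓ) (((Equiv.Perm.sign σ : ℤ)) : F)).mul hp
      simpa using hs
    obtain ⟨x, hx⟩ : ∃ x, MvPolynomial.eval x (Matrix.det
      (∑ j : Fin ℓ, (MvPolynomial.X j : MvPolynomial (Fin ℓ) F) •
        (Pb j).map (MvPolynomial.C : F → MvPolynomial (Fin ℓ) F) :
            Matrix (Fin n) (Fin n) (MvPolynomial (Fin ℓ) F))) ≠ 0 := by
      by_contra! hall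
      exact h0 (hhom.eq_zero_of_forall_eval_eq_zero_of_le_card hall hF.le)
    rw [hev] at hx
    have hmem : (∑ j, x j • Pb j) ∈ Submodule.span F (Set.range Pb) :=
      (Submodule.mem_span_range_iff_exists_fun F).2 ⟨x, rfl⟩
    rw [← hspan] at hmem
    refine ⟨Matrix.GeneralLinearGroup.mkOfDetNeZero _ hx, fun i => ?_⟩
    rw [Units.eq_mul_inv_iff_mul_eq]
    exact hmem i
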